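/- Let r and n be integers with 2 ≤ r < n. The largest eigenvalue of the real adjacency matrix of the graph S_{n,r} equals ( (r-2) + sqrt( (r-2)² + 4(r-1)(n-r+1) ) ) / 2. -/

import Mathlib

open SimpleGraph

/-- The graph `S_{n,r}`: a complete graph on the `r-1` vertices `{0, …, r-2}` of `Fin n`,
together with `n-r+1` further vertices each adjacent exactly to those `r-1` vertices;
i.e. two distinct vertices are adjacent iff at least one of them lies in `{0, …, r-2}`. -/
def Snr (n r : ℕ) : SimpleGraph (Fin n) :=
  SimpleGraph.fromRel (fun u v => (u : ℕ) < r - 1 ∨ (v : ℕ) < r - 1)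

instance (n r : ℕ) : DecidableRel (Snr n r).Adj := fun u v =>
  decidable_of_iff _ (SimpleGraph.fromRel_adj _ u v).symm

/-!
A positive eigenvector `w` of an entrywise nonnegative matrix belongs to its largest eigenvalue:
compare it with another eigenvector `v` at an index where `|v i| / w i` is maximal.
With `k` dominating and `b` remaining vertices, a vector equal to `x` on the former and to `y` on
the latter is an eigenvector as soon as `(x, y)` is one of the quotient matrix `!![k - 1, b; k, 0]`.
For `0 < b`, the larger root `m` of `m ^ 2 = (k - 1) * m + k * b` has the positive eigenvector
`(m + b, m + 1)`; the more obvious choice `(m, k)` vanishes when `k = 0`.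
-/

open Finset Matrix

section Perron

variable {ι : Type*} [Fintype ι]

theorem abs_eigenvalue_le_of_pos_of_mulVec_le_smul {R : Type*} [Field R] [LinearOrder R]
    [IsStrictOrderedRing R] {A : Matrix ι ι R} (hA : ∀ i j, 0 ≤ A i j) {w : ι → R}
    (hw : ∀ i, 0 < w i) {m : R} (hAw : A *ᵥ w ≤ m • w) {v : ι → R} (hv : v ≠ 0) {l : R}
    (hAv : A *ᵥ v = l • v) : |l| ≤ m := by
  obtain ⟨k, hk⟩ := Function.ne_iff.1 hv
  obtain ⟨i, -, hmax⟩ := exists_max_image univ (fun i ↦ |v i| / w i) ⟨k, mem_univ k⟩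
  set t := |v i| / w i
  have hv_le (j : ι) : |v j| ≤ t * w j := (div_le_iff₀ (hw j)).1 (hmax j (mem_univ j))
  have hvi : |v i| = t * w i := (div_mul_cancel₀ _ (hw i).ne').symm
  have ht_pos : 0 < t := (div_pos (abs_pos.2 hk) (hw k)).trans_le (hmax k (mem_univ k))
  have hvi_pos : 0 < |v i| := hvi ▸ mul_pos ht_pos (hw i)
  refine le_of_mul_le_mul_right ?_ hvi_pos
  calc |l| * |v i| = |(A *ᵥ v) i| := by rw [hAv, Pi.smul_apply, smul_eq_mul, abs_mul]
    _ ≤ ∑ j, |A i j * v j| := abs_sum_le_sum_abs _ _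
    _ = ∑ j, A i j * |v j| := by simp_rw [abs_mul, abs_of_nonneg (hA i _)]
    _ ≤ ∑ j, A i j * (t * w j) := by gcongr with j; exacts [hA i j, hv_le j]
    _ = t * (A *ᵥ w) i := by simp_rw [mulVec, dotProduct, mul_sum, mul_left_comm]
    _ ≤ t * (m * w i) := by gcongr; exact hAw i
    _ = m * |v i| := by rw [hvi, mul_left_comm]

theorem isGreatest_range_eigenvalues_of_pos_eigenvector [DecidableEq ι] [Nonempty ι]
    {A : Matrix ι ι ℝ} (hA : A.IsHermitian) (hA_nonneg : ∀ i j, 0 ≤ A i j) {w : ι → ℝ}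
    (hw : ∀ i, 0 < w i) {m : ℝ} (hAw : A *ᵥ w = m • w) :
    IsGreatest (Set.range hA.eigenvalues) m := by
  constructor
  · have hw_ne : w ≠ 0 := Function.ne_iff.2 ⟨Classical.arbitrary ι, (hw _).ne'⟩
    rw [← hA.spectrum_real_eq_range_eigenvalues, ← spectrum_toLin',
      ← Module.End.hasEigenvalue_iff_mem_spectrum]
    exact Module.End.hasEigenvalue_of_hasEigenvector
      ⟨Module.End.mem_eigenspace_iff.2 ((toLin'_apply A w).trans hAw), hw_ne⟩
  · rintro _ ⟨i, rfl⟩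
    have hv_ne : ⇑(hA.eigenvectorBasis i) ≠ 0 := fun h ↦
      hA.eigenvectorBasis.orthonormal.ne_zero i (PiLp.ext (congrFun h))
    exact (le_abs_self _).trans (abs_eigenvalue_le_of_pos_of_mulVec_le_smul hA_nonneg hw hAw.le
      hv_ne (hA.mulVec_eigenvectorBasis i))

end Perron

/-- `G` is the complete split graph with clique `s`, that is, the join of the complete graph on `s`
and the edgeless graph on `sᶜ`. As a property of `G`, it applies to a graph given in any form. -/
def IsCompleteSplitWith {V : Type*} (G : SimpleGraph V) (s : Finset V) : Prop :=
  ∀ u v, G.Adj u v ↔ u ≠ v ∧ (u ∈ s ∨ v ∈ s)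

namespace IsCompleteSplitWith

variable {V : Type*} [Fintype V] {G : SimpleGraph V} [DecidableRel G.Adj] {s : Finset V} {v : V}

theorem neighborFinset_of_notMem (hG : IsCompleteSplitWith G s) (hv : v ∉ s) :
    G.neighborFinset v = s := by
  ext u
  simp only [mem_neighborFinset, hG v u, hv, false_or, and_iff_right_iff_imp]
  exact fun hu h ↦ hv (h ▸ hu)

variable [DecidableEq V]

theorem neighborFinset_of_mem (hG : IsCompleteSplitWith G s) (hv : v ∈ s) :
    G.neighborFinset v = univ.erase v := by
  ext u
  simp [hG v u, hv, eq_comm]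

theorem adjMatrix_mulVec_piecewise {R : Type*} [CommRing R] (hG : IsCompleteSplitWith G s)
    {m : R} (hm : m ^ 2 = (#s - 1) * m + #s * #sᶜ) :
    G.adjMatrix R *ᵥ s.piecewise (fun _ ↦ m + #sᶜ) (fun _ ↦ m + 1) =
      m • s.piecewise (fun _ ↦ m + #sᶜ) (fun _ ↦ m + 1) := by
  ext v
  rw [adjMatrix_mulVec_apply, Pi.smul_apply, smul_eq_mul]
  by_cases hv : v ∈ s
  · rw [hG.neighborFinset_of_mem hv, sum_erase_eq_sub (mem_univ v), sum_piecewise,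
      piecewise_eq_of_mem _ _ _ hv, univ_inter, ← compl_eq_univ_sdiff, sum_const, sum_const,
      nsmul_eq_mul, nsmul_eq_mul]
    linear_combination -hm
  · rw [hG.neighborFinset_of_notMem hv, sum_piecewise, piecewise_eq_of_notMem _ _ _ hv,
      inter_self, sdiff_self, bot_eq_empty, sum_empty, sum_const, nsmul_eq_mul]
    linear_combination -hm

end IsCompleteSplitWith

theorem sq_add_sqrt_div_two {p q : ℝ} (h : 0 ≤ p ^ 2 + 4 * q) :
    ((p + √(p ^ 2 + 4 * q)) / 2) ^ 2 = p * ((p + √(p ^ 2 + 4 * q)) / 2) + q := by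
  linear_combination Real.sq_sqrt h / 4

theorem add_sqrt_div_two_nonneg {p q : ℝ} (hq : 0 ≤ q) : 0 ≤ (p + √(p ^ 2 + 4 * q)) / 2 := by
  have hp : |p| ≤ √(p ^ 2 + 4 * q) := Real.abs_le_sqrt (by linarith)
  linarith [neg_abs_le p]

theorem stmt_5_general {V : Type*} [Fintype V] [DecidableEq V] {G : SimpleGraph V}
    [DecidableRel G.Adj] {s : Finset V} (hG : IsCompleteSplitWith G s) (hs : sᶜ.Nonempty)
    (hA : (G.adjMatrix ℝ).IsHermitian) :
    IsGreatest (Set.range hA.eigenvalues)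
      (((#s - 1 : ℝ) + √((#s - 1 : ℝ) ^ 2 + 4 * #s * #sᶜ)) / 2) := by
  have : Nonempty V := hs.to_type
  rw [mul_assoc]
  have hm := sq_add_sqrt_div_two (p := #s - 1) (q := #s * #sᶜ) (by positivity)
  have hm_nonneg := add_sqrt_div_two_nonneg (p := #s - 1) (q := #s * #sᶜ) (by positivity)
  refine isGreatest_range_eigenvalues_of_pos_eigenvector hA (fun u v ↦ ?_) (fun v ↦ ?_)
    (hG.adjMatrix_mulVec_piecewise hm)
  · rw [adjMatrix_apply]
    split_ifs <;> simp
  · by_cases hv : v ∈ s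
    · rw [piecewise_eq_of_mem _ _ _ hv]
      positivity
    · rw [piecewise_eq_of_notMem _ _ _ hv]
      positivity

/-- The dominating vertices of `Snr n r`, namely the set `S` of `r - 1` vertices from which
`S_{n,r}` is built. -/
def snrCore (n r : ℕ) : Finset (Fin n) :=
  {i | (i : ℕ) < r - 1}

section Snr

variable {n r : ℕ}

theorem isCompleteSplitWith_snr : IsCompleteSplitWith (Snr n r) (snrCore n r) := by
  intro u v
  simp [Snr, snrCore, or_comm]

theorem card_snrCore (hrn : r ≤ n + 1) : #(snrCore n r) = r - 1 := by
  rw [snrCore, Fin.card_filter_val_lt]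
  omega

theorem cast_card_snrCore (hr : 0 < r) (hrn : r ≤ n + 1) : (#(snrCore n r) : ℝ) = r - 1 := by
  rw [card_snrCore hrn, Nat.cast_pred hr]

theorem cast_card_compl_snrCore (hr : 0 < r) (hrn : r ≤ n + 1) :
    (#(snrCore n r)ᶜ : ℝ) = n - r + 1 := by
  rw [card_compl, Nat.cast_sub (card_le_univ _), cast_card_snrCore hr hrn,
    Fintype.card_fin, sub_add]

theorem compl_snrCore_nonempty (hr : 0 < r) (hrn : r ≤ n) : (snrCore n r)ᶜ.Nonempty := by
  rw [← card_pos, card_compl, card_snrCore (by omega), Fintype.card_fin]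
  omega

end Snr

/-- The largest eigenvalue of the adjacency matrix of `S_{n,r}` equals
`((r-2) + sqrt((r-2)² + 4(r-1)(n-r+1))) / 2`. -/
theorem stmt_5 (r n : ℕ) (hr : 2 ≤ r) (hrn : r < n)
    (hA : ((Snr n r).adjMatrix ℝ).IsHermitian) :
    IsGreatest (Set.range hA.eigenvalues)
      ((((r : ℝ) - 2) + Real.sqrt (((r : ℝ) - 2) ^ 2
        + 4 * ((r : ℝ) - 1) * ((n : ℝ) - (r : ℝ) + 1))) / 2) := by
  have hr_pos : 0 < r := by omega
  have hrn_succ : r ≤ n + 1 := by omega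
  simpa only [cast_card_snrCore hr_pos hrn_succ, cast_card_compl_snrCore hr_pos hrn_succ, sub_sub,
    one_add_one_eq_two] using
    stmt_5_general isCompleteSplitWith_snr (compl_snrCore_nonempty hr_pos hrn.le) hA
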